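/- arXiv:1508.04102 — 2 statements merged into one kernel-verified Lean document; each statement's English description precedes it below -/
import Mathlib

section
/- Fix a time t ∈ ℝ, an index i, and angles φⱼ ∈ [−π/2, π/2] for all j ≠ i. Then, in the coupled pendulum system: (a) if φᵢ = π/2 and pᵢ = 0, the right-hand side of the equation for ṗᵢ is strictly positive, i.e. g/lᵢ + (1/(mᵢ lᵢ)) ∑_{j≠i} (F_{ij}, e_{φᵢ}) > 0; (b) if φᵢ = −π/2 and pᵢ = 0, the right-hand side is strictly negative, i.e. −g/lᵢ + (1/(mᵢ lᵢ)) ∑_{j≠i} (F_{ij}, e_{φᵢ}) < 0. In particular, (F_{ij}, e_{φᵢ}) ≥ 0 when φᵢ = π/2 and (F_{ij}, e_{φᵢ}) ≤ 0 when φᵢ = −π/2, for every j ≠ i. -/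
open Real

/-- Euclidean inner product on ℝ². -/
def dot2 (u v : ℝ × ℝ) : ℝ := u.1 * v.1 + u.2 * v.2

/-- Euclidean norm on ℝ². -/
noncomputable def norm2 (u : ℝ × ℝ) : ℝ := Real.sqrt (dot2 u u)

/-- Position of the bob of a pendulum with pivot abscissa `σ + h t`, length `l`
and angle `φ` measured from the upward vertical. -/
noncomputable def pendBob (σ : ℝ) (h : ℝ → ℝ) (l : ℝ) (t φ : ℝ) : ℝ × ℝ :=
  (σ + h t + l * Real.sin φ, l * Real.cos φ)

/-- The unit vector `e_φ = (cos φ, −sin φ)`. -/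
noncomputable def ephi (φ : ℝ) : ℝ × ℝ := (Real.cos φ, -Real.sin φ)

/-- `(F_{ij}, e_{φᵢ})`, the component of the repelling force
`F_{ij} = f_{ij}(φᵢ,φⱼ)·(rᵢ−rⱼ)/|rᵢ−rⱼ|` along `e_{φᵢ}`. -/
noncomputable def interDot (σi σj : ℝ) (h : ℝ → ℝ) (li lj : ℝ)
    (fij : ℝ → ℝ → ℝ) (t φi φj : ℝ) : ℝ :=
  fij φi φj / norm2 (pendBob σi h li t φi - pendBob σj h lj t φj) *
    dot2 (pendBob σi h li t φi - pendBob σj h lj t φj) (ephi φi)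

/-!
When pendulum `i` lies horizontally, `e_{φᵢ}` is vertical and the bob is at pivot height, so
`(rᵢ − rⱼ, e_{φᵢ}) = ± lⱼ cos φⱼ`: the horizontal separation drops out and only the height of
bob `j` matters. A repelling bob at or above pivot height therefore pushes downwards, in the same
direction as gravity.
-/

section Interaction

variable (σi σj : ℝ) (h : ℝ → ℝ) (li lj t φi φj : ℝ) (fij : ℝ → ℝ → ℝ)

theorem norm2_nonneg (u : ℝ × ℝ) : 0 ≤ norm2 u :=
  Real.sqrt_nonneg _

theorem dot2_pendBob_sub_ephi_pi_div_two :
    dot2 (pendBob σi h li t (π / 2) - pendBob σj h lj t φj) (ephi (π / 2)) = lj * cos φj := by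
  simp [dot2, pendBob, ephi]

theorem dot2_pendBob_sub_ephi_neg_pi_div_two :
    dot2 (pendBob σi h li t (-(π / 2)) - pendBob σj h lj t φj) (ephi (-(π / 2))) =
      -(lj * cos φj) := by
  simp [dot2, pendBob, ephi]

variable {lj φj fij}

theorem interDot_pi_div_two_nonneg (hf : 0 ≤ fij (π / 2) φj) (hheight : 0 ≤ lj * cos φj) :
    0 ≤ interDot σi σj h li lj fij t (π / 2) φj := by
  rw [interDot, dot2_pendBob_sub_ephi_pi_div_two]
  exact mul_nonneg (div_nonneg hf (norm2_nonneg _)) hheight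

theorem interDot_neg_pi_div_two_nonpos (hf : 0 ≤ fij (-(π / 2)) φj)
    (hheight : 0 ≤ lj * cos φj) :
    interDot σi σj h li lj fij t (-(π / 2)) φj ≤ 0 := by
  rw [interDot, dot2_pendBob_sub_ephi_neg_pi_div_two]
  exact mul_nonpos_of_nonneg_of_nonpos (div_nonneg hf (norm2_nonneg _))
    (neg_nonpos.mpr hheight)

variable {σi σj li φi}

theorem pendBob_ne_of_add_lt_abs_sub (hli : 0 ≤ li) (hlj : 0 ≤ lj)
    (hσ : li + lj < |σi - σj|) : pendBob σi h li t φi ≠ pendBob σj h lj t φj := by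
  intro heq
  have habscissa : σi + h t + li * sin φi = σj + h t + lj * sin φj := congrArg Prod.fst heq
  refine hσ.not_ge ?_
  calc |σi - σj| = |lj * sin φj - li * sin φi| := by congr 1; linarith
    _ ≤ |lj * sin φj| + |li * sin φi| := abs_sub _ _
    _ = lj * |sin φj| + li * |sin φi| := by
      rw [abs_mul, abs_mul, abs_of_nonneg hli, abs_of_nonneg hlj]
    _ ≤ lj + li :=
      add_le_add (mul_le_of_le_one_right hlj (abs_sin_le_one _))
        (mul_le_of_le_one_right hli (abs_sin_le_one _))
    _ = li + lj := add_comm _ _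

end Interaction

theorem coupled_pendulums_boundary_sign_general {ι : Type*} [Fintype ι] [DecidableEq ι]
    {g : ℝ} (hg : 0 < g) {m l : ι → ℝ} (σ : ι → ℝ) (h : ℝ → ℝ) {f : ι → ι → ℝ → ℝ → ℝ}
    (t : ℝ) {i : ι} {φ : ι → ℝ} (hm : 0 < m i) (hl : 0 < l i)
    (_hbob : ∀ j, j ≠ i → pendBob (σ i) h (l i) t (φ i) ≠ pendBob (σ j) h (l j) t (φ j))
    (hf : ∀ j, j ≠ i → 0 ≤ f i j (φ i) (φ j)) (hheight : ∀ j, j ≠ i → 0 ≤ l j * cos (φ j)) :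
    (φ i = π / 2 →
      (0 < g / l i + (1 / (m i * l i)) *
          ∑ j ∈ Finset.univ.erase i,
            interDot (σ i) (σ j) h (l i) (l j) (f i j) t (φ i) (φ j)) ∧
      ∀ j, j ≠ i →
        0 ≤ interDot (σ i) (σ j) h (l i) (l j) (f i j) t (φ i) (φ j)) ∧
    (φ i = -(π / 2) →
      (-(g / l i) + (1 / (m i * l i)) *
          ∑ j ∈ Finset.univ.erase i,
            interDot (σ i) (σ j) h (l i) (l j) (f i j) t (φ i) (φ j) < 0) ∧
      ∀ j, j ≠ i →
        interDot (σ i) (σ j) h (l i) (l j) (f i j) t (φ i) (φ j) ≤ 0) := by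
  have hgravity : 0 < g / l i := div_pos hg hl
  have hinertia : 0 ≤ 1 / (m i * l i) := by positivity
  refine ⟨fun hφi => ?_, fun hφi => ?_⟩ <;> rw [hφi] at hf ⊢
  · have hforce j (hj : j ≠ i) :=
      interDot_pi_div_two_nonneg (σ i) (σ j) h (l i) t (hf j hj) (hheight j hj)
    have hsum := Finset.sum_nonneg (s := Finset.univ.erase i) fun j hj =>
      hforce j (Finset.ne_of_mem_erase hj)
    exact ⟨add_pos_of_pos_of_nonneg hgravity (mul_nonneg hinertia hsum), hforce⟩
  · have hforce j (hj : j ≠ i) :=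
      interDot_neg_pi_div_two_nonpos (σ i) (σ j) h (l i) t (hf j hj) (hheight j hj)
    have hsum := Finset.sum_nonpos (s := Finset.univ.erase i) fun j hj =>
      hforce j (Finset.ne_of_mem_erase hj)
    exact ⟨add_neg_of_neg_of_nonpos (neg_neg_of_pos hgravity)
      (mul_nonpos_of_nonneg_of_nonpos hinertia hsum), hforce⟩

theorem coupled_pendulums_boundary_sign
    (n : ℕ) (hn : 1 ≤ n) (g T : ℝ) (hg : 0 < g) (hT : 0 < T)
    (m l γ σ : Fin n → ℝ)
    (hm : ∀ i, 0 < m i) (hl : ∀ i, 0 < l i) (hγ : ∀ i, 0 < γ i)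
    -- the pendulums are pairwise disjoint
    (hσ : ∀ i j, i ≠ j → l i + l j < |σ i - σ j|)
    (h : ℝ → ℝ) (hh : ContDiff ℝ (⊤ : ℕ∞) h) (hhper : ∀ t, h (t + T) = h t)
    (f : Fin n → Fin n → ℝ → ℝ → ℝ)
    (hfsmooth : ∀ i j, ContDiff ℝ (⊤ : ℕ∞) (fun u : ℝ × ℝ => f i j u.1 u.2))
    (hfpos : ∀ i j x y, 0 ≤ f i j x y)
    -- fixed time, index and angles of the other pendulums
    (t : ℝ) (i : Fin n) (φ : Fin n → ℝ)
    (hφ : ∀ j, j ≠ i → φ j ∈ Set.Icc (-(π / 2)) (π / 2)) :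
    -- (a) at φᵢ = π/2 (with pᵢ = 0) the right-hand side is strictly positive
    (φ i = π / 2 →
      (0 < g / l i + (1 / (m i * l i)) *
          ∑ j ∈ Finset.univ.erase i,
            interDot (σ i) (σ j) h (l i) (l j) (f i j) t (φ i) (φ j)) ∧
      ∀ j, j ≠ i →
        0 ≤ interDot (σ i) (σ j) h (l i) (l j) (f i j) t (φ i) (φ j)) ∧
    -- (b) at φᵢ = −π/2 (with pᵢ = 0) the right-hand side is strictly negative
    (φ i = -(π / 2) →
      (-(g / l i) + (1 / (m i * l i)) *
          ∑ j ∈ Finset.univ.erase i,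
            interDot (σ i) (σ j) h (l i) (l j) (f i j) t (φ i) (φ j) < 0) ∧
      ∀ j, j ≠ i →
        interDot (σ i) (σ j) h (l i) (l j) (f i j) t (φ i) (φ j) ≤ 0) := by
  exact coupled_pendulums_boundary_sign_general hg σ h t (hm i) (hl i)
    (fun j hj => pendBob_ne_of_add_lt_abs_sub h t (hl i).le (hl j).le (hσ i j hj.symm))
    (fun j _ => hfpos i j _ _)
    (fun j hj => mul_nonneg (hl j).le (cos_nonneg_of_mem_Icc (hφ j hj)))
end

section
/- Suppose that (−1)^{k+1} · F(t, k(δ + a)) < 0 for all t ∈ ℝ and all k = 1, …, 2n. Fix i ∈ {1,…,n}, t ∈ ℝ, and positions xⱼ with (2j − 1)(δ + a) ≤ xⱼ ≤ 2j(δ + a) for every j ∈ {1,…,n} \ {i} (and x₀ = 0, x_{n+1} = (2n+1)(δ + a)). Then: (a) if xᵢ = (2i − 1)(δ + a) (left endpoint), the acceleration with ẋᵢ = 0 is strictly negative: −V′(xᵢ − x_{i−1}) + V′(x_{i+1} − xᵢ) + F(t, xᵢ) < 0; (b) if xᵢ = 2i(δ + a) (right endpoint), it is strictly positive: −V′(xᵢ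 − x_{i−1}) + V′(x_{i+1} − xᵢ) + F(t, xᵢ) > 0. That is, at the boundary of the block [(2i−1)(δ+a), 2i(δ+a)] with zero velocity, the acceleration of the i-th oscillator is directed outward. -/
/-- The Morse potential `V(x) = ½(1 − e^{−(x−δ)})²`. -/
noncomputable def morseV (δ : ℝ) (x : ℝ) : ℝ := (1 - Real.exp (-(x - δ))) ^ 2 / 2

/-!
Beyond its inflection point `δ + log 2` the Morse potential is concave, so of two bonds longer than
that the shorter one pulls harder. Put `L = δ + a`. An oscillator at an endpoint of its block is at
distance between `L` and `2L` from the neighbour beyond that endpoint, and at distance at least `2L`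
from the other neighbour. Hence the chain does not pull it inward, and the field pushes it strictly
outward.
-/

theorem deriv_morseV (δ x : ℝ) :
    deriv (morseV δ) x = (1 - Real.exp (-(x - δ))) * Real.exp (-(x - δ)) := by
  have hexponent : HasDerivAt (fun y : ℝ => -(y - δ)) (-1) x :=
    ((hasDerivAt_id x).sub_const δ).neg
  have hV : HasDerivAt (morseV δ) _ x := ((hexponent.exp.const_sub 1).pow 2).div_const 2
  rw [hV.deriv]
  push_cast
  ring

theorem monotoneOn_one_sub_mul_self :
    MonotoneOn (fun r : ℝ => (1 - r) * r) (Set.Iic (1 / 2)) := by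
  intro r hr s hs hrs
  have hsum : 0 ≤ 1 - r - s := by linarith [Set.mem_Iic.mp hr, Set.mem_Iic.mp hs]
  have hdiff : (1 - s) * s - (1 - r) * r = (s - r) * (1 - r - s) := by ring
  exact sub_nonneg.mp (hdiff ▸ mul_nonneg (sub_nonneg.mpr hrs) hsum)

theorem antitoneOn_deriv_morseV (δ : ℝ) :
    AntitoneOn (deriv (morseV δ)) (Set.Ici (δ + Real.log 2)) := by
  have hexp : Antitone fun x : ℝ => Real.exp (-(x - δ)) := fun x y hxy =>
    Real.exp_le_exp.mpr (by linarith)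
  have hhalf : Set.MapsTo (fun x : ℝ => Real.exp (-(x - δ)))
      (Set.Ici (δ + Real.log 2)) (Set.Iic (1 / 2)) := by
    intro x hx
    calc Real.exp (-(x - δ)) ≤ Real.exp (-(δ + Real.log 2 - δ)) := hexp hx
      _ = 1 / 2 := by rw [add_sub_cancel_left, Real.exp_neg, Real.exp_log two_pos, one_div]
  exact (monotoneOn_one_sub_mul_self.comp_AntitoneOn (hexp.antitoneOn _) hhalf).congr
    fun x _ => (deriv_morseV δ x).symm

/-- The block `[(2k − 1)L, 2kL]` assigned to the `k`-th oscillator. The index is real so that the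
block preceding the `k`-th is `block L (k - 1)` without truncated subtraction. -/
def block (L k : ℝ) : Set ℝ := Set.Icc ((2 * k - 1) * L) (2 * k * L)

section Bonds

variable {φ : ℝ → ℝ} {L k y z : ℝ}

theorem bond_force_le_at_left_endpoint (hφ : AntitoneOn φ (Set.Ici L))
    (hy : y ∈ block L (k - 1)) (hz : z ∈ block L (k + 1)) :
    φ (z - (2 * k - 1) * L) ≤ φ ((2 * k - 1) * L - y) := by
  have hprev : L ≤ (2 * k - 1) * L - y := by linarith [hy.2]
  have hle : (2 * k - 1) * L - y ≤ z - (2 * k - 1) * L := by linarith [hy.1, hz.1]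
  exact hφ hprev (hprev.trans hle) hle

theorem bond_force_le_at_right_endpoint (hφ : AntitoneOn φ (Set.Ici L))
    (hy : y ∈ block L (k - 1)) (hz : z ∈ block L (k + 1)) :
    φ (2 * k * L - y) ≤ φ (z - 2 * k * L) := by
  have hnext : L ≤ z - 2 * k * L := by linarith [hz.1]
  have hle : z - 2 * k * L ≤ 2 * k * L - y := by linarith [hy.2, hz.2]
  exact hφ hnext (hnext.trans hle) hle

end Bonds

-- The fixed boundary particles lie in the fictitious blocks `0` and `n + 1`.
theorem mem_block_of_ne {L : ℝ} (hL : 0 ≤ L) {n i : ℕ} {x : ℕ → ℝ}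
    (hx0 : x 0 = 0) (hxn : x (n + 1) = (2 * (n : ℝ) + 1) * L)
    (hxj : ∀ j : ℕ, 1 ≤ j → j ≤ n → j ≠ i → x j ∈ block L j)
    {j : ℕ} (hj : j ≤ n + 1) (hji : j ≠ i) : x j ∈ block L j := by
  rcases Nat.eq_zero_or_pos j with rfl | hpos
  · rw [hx0]
    constructor <;> push_cast <;> linarith
  rcases hj.eq_or_lt with rfl | hlt
  · rw [hxn]
    constructor <;> push_cast <;> linarith
  · exact hxj j hpos (Nat.le_of_lt_succ hlt) hji

section AlternatingField

variable {f : ℝ → ℝ} {L : ℝ} {n i : ℕ}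

theorem field_neg_at_left_endpoint
    (hf : ∀ k : ℕ, 1 ≤ k → k ≤ 2 * n → (-1 : ℝ) ^ (k + 1) * f (k * L) < 0)
    (hi1 : 1 ≤ i) (hi2 : i ≤ n) : f ((2 * (i : ℝ) - 1) * L) < 0 := by
  have hfield := hf (2 * i - 1) (by omega) (by omega)
  have hcast : ((2 * i - 1 : ℕ) : ℝ) = 2 * i - 1 := by
    rw [Nat.cast_pred (by omega), Nat.cast_mul, Nat.cast_two]
  rwa [Nat.sub_add_cancel (by omega), (even_two_mul i).neg_one_pow, one_mul, hcast] at hfield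

theorem field_pos_at_right_endpoint
    (hf : ∀ k : ℕ, 1 ≤ k → k ≤ 2 * n → (-1 : ℝ) ^ (k + 1) * f (k * L) < 0)
    (hi1 : 1 ≤ i) (hi2 : i ≤ n) : 0 < f (2 * (i : ℝ) * L) := by
  have hfield := hf (2 * i) (by omega) (by omega)
  rw [(even_two_mul i).add_one.neg_one_pow, neg_one_mul, neg_lt_zero] at hfield
  exact_mod_cast hfield

end AlternatingField

/-- Here `φ` plays the role of `V′`, `f` that of `F(t, ·)` and `L` that of `δ + a`. -/
theorem oscillator_chain_boundary_outward_general
    {φ f : ℝ → ℝ} {L : ℝ} (hL : 0 ≤ L) (hφ : AntitoneOn φ (Set.Ici L)) {n : ℕ}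
    (hf : ∀ k : ℕ, 1 ≤ k → k ≤ 2 * n → (-1 : ℝ) ^ (k + 1) * f (k * L) < 0)
    {i : ℕ} (hi1 : 1 ≤ i) (hi2 : i ≤ n) {x : ℕ → ℝ}
    (hx0 : x 0 = 0) (hxn : x (n + 1) = (2 * (n : ℝ) + 1) * L)
    (hxj : ∀ j : ℕ, 1 ≤ j → j ≤ n → j ≠ i → x j ∈ block L j) :
    (x i = (2 * (i : ℝ) - 1) * L →
      -φ (x i - x (i - 1)) + φ (x (i + 1) - x i) + f (x i) < 0) ∧
    (x i = 2 * (i : ℝ) * L →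
      0 < -φ (x i - x (i - 1)) + φ (x (i + 1) - x i) + f (x i)) := by
  have hprev : x (i - 1) ∈ block L (i - 1) := by
    simpa only [Nat.cast_pred hi1] using
      mem_block_of_ne hL hx0 hxn hxj (j := i - 1) (by omega) (by omega)
  have hnext : x (i + 1) ∈ block L (i + 1) := by
    simpa only [Nat.cast_succ] using
      mem_block_of_ne hL hx0 hxn hxj (j := i + 1) (by omega) (by omega)
  constructor <;> intro hxi <;> rw [hxi]
  · linarith [bond_force_le_at_left_endpoint hφ hprev hnext,
      field_neg_at_left_endpoint hf hi1 hi2]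
  · linarith [bond_force_le_at_right_endpoint hφ hprev hnext,
      field_pos_at_right_endpoint hf hi1 hi2]

theorem oscillator_chain_boundary_outward
    (n : ℕ) (hn : 1 ≤ n) (γ δ a T : ℝ)
    (hγ : 0 < γ) (hδ : 0 < δ) (ha : Real.log 2 ≤ a) (hT : 0 < T)
    (F : ℝ → ℝ → ℝ)
    (hF : ContDiff ℝ (⊤ : ℕ∞) (fun u : ℝ × ℝ => F u.1 u.2))
    (hFper : ∀ t x, F (t + T) x = F t x)
    -- (−1)^{k+1}·F(t, k(δ+a)) < 0 for all t and k = 1,…,2n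
    (hcond : ∀ t : ℝ, ∀ k : ℕ, 1 ≤ k → k ≤ 2 * n →
      (-1 : ℝ) ^ (k + 1) * F t ((k : ℝ) * (δ + a)) < 0)
    -- a fixed index, time and positions
    (i : ℕ) (hi1 : 1 ≤ i) (hi2 : i ≤ n) (t : ℝ) (x : ℕ → ℝ)
    (hx0 : x 0 = 0) (hxn : x (n + 1) = (2 * (n : ℝ) + 1) * (δ + a))
    (hxj : ∀ j : ℕ, 1 ≤ j → j ≤ n → j ≠ i →
      (2 * (j : ℝ) - 1) * (δ + a) ≤ x j ∧ x j ≤ 2 * (j : ℝ) * (δ + a)) :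
    -- (a) at the left endpoint the acceleration (with ẋᵢ = 0) is strictly negative
    (x i = (2 * (i : ℝ) - 1) * (δ + a) →
      -deriv (morseV δ) (x i - x (i - 1)) + deriv (morseV δ) (x (i + 1) - x i)
        + F t (x i) < 0) ∧
    -- (b) at the right endpoint it is strictly positive
    (x i = 2 * (i : ℝ) * (δ + a) →
      0 < -deriv (morseV δ) (x i - x (i - 1)) + deriv (morseV δ) (x (i + 1) - x i)
        + F t (x i)) := by
  exact oscillator_chain_boundary_outward_general
    (add_nonneg hδ.le ((Real.log_nonneg one_le_two).trans ha))
    ((antitoneOn_deriv_morseV δ).mono (Set.Ici_subset_Ici.mpr (by gcongr)))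
    (hcond t) hi1 hi2 hx0 hxn hxj
end
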